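/- arXiv:2510.19381 — 2 statements merged into one kernel-verified Lean document; each statement's English description precedes it below -/
import Mathlib

section
/- For all integers n ≥ 2 and m ≥ 2, (γ̄_{n,m} / γ̄_{n,m-1})^2 ≤ 20/(3e^2) where e is Euler's number; in particular γ̄_{n,m} < γ̄_{n,m-1}. -/
/-- `γ̄_{n,m}`. -/
noncomputable def gammaBar (n m : ℕ) : ℝ :=
  (1 / (2 : ℝ) ^ ((n : ℤ) - m + 1)) *
    (((n : ℝ) + m) / ((n : ℝ) + m - 1) ^ (n + m)) *
    (Real.Gamma ((m : ℝ) / 2) * Real.Gamma (2 * (n : ℝ) + m) /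
      Real.Gamma ((n : ℝ) + m / 2))

/-!
By the functional equation of `Γ`, with `N = n + k`,
`γ̄_{n,k+1} / γ̄_{n,k} = 4 (N + 1) / N² · (1 - 1/N)^N · Γ(x + 1/2) / Γ(x) · Γ(y + 1/2) / Γ(y)`,
where `x = k/2` and `y = n + k/2 + 1/2`. Log-convexity of `Γ` bounds the squares of the two Gamma
quotients by `x` and `y`, and `4 x y = N (N + 1) - n (n + 1)`, while `(1 - 1/N)^N ≤ e⁻¹`. What
remains is an inequality between polynomials in `N`.
-/

open Real

theorem Gamma_add_le_rpow_mul_Gamma {x s : ℝ} (hx : 0 < x) (hs₀ : 0 ≤ s) (hs₁ : s ≤ 1) :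
    Gamma (x + s) ≤ x ^ s * Gamma x := by
  rcases hs₀.eq_or_lt with rfl | hs₀
  · simp
  rcases hs₁.eq_or_lt with rfl | hs₁
  · rw [Gamma_add_one hx.ne', rpow_one]
  have hΓ : 0 < Gamma x := Gamma_pos_of_pos hx
  calc Gamma (x + s) = Gamma ((1 - s) * x + s * (x + 1)) := by ring_nf
    _ ≤ Gamma x ^ (1 - s) * Gamma (x + 1) ^ s :=
      Gamma_mul_add_mul_le_rpow_Gamma_mul_rpow_Gamma hx (by positivity) (sub_pos.2 hs₁) hs₀
        (sub_add_cancel 1 s)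
    _ = x ^ s * (Gamma x ^ (1 - s) * Gamma x ^ s) := by
      rw [Gamma_add_one hx.ne', mul_rpow hx.le hΓ.le]
      ring
    _ = x ^ s * Gamma x := by
      rw [← rpow_add hΓ, sub_add_cancel, rpow_one]

theorem Gamma_add_half_div_Gamma_sq_le {x : ℝ} (hx : 0 < x) :
    (Gamma (x + 1 / 2) / Gamma x) ^ 2 ≤ x := by
  have hΓ : 0 < Gamma x := Gamma_pos_of_pos hx
  have := Gamma_pos_of_pos (s := x + 1 / 2) (by positivity)
  rw [← le_sqrt' (by positivity), div_le_iff₀ hΓ, sqrt_eq_rpow]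
  exact Gamma_add_le_rpow_mul_Gamma hx (by norm_num) (by norm_num)

theorem four_mul_add_one_sq_mul_sub_six_le (x : ℝ) :
    4 * (x + 1) ^ 2 * (x * (x + 1) - 6) ≤ 20 / 3 * x ^ 4 := by
  have hsos : 20 / 3 * x ^ 4 - 4 * (x + 1) ^ 2 * (x * (x + 1) - 6) =
      4 / 3 * (2 * (x ^ 2 - 9 / 4 * x - 2) ^ 2 + 5 / 8 * (3 * x + 4) ^ 2 + 5 / 4 * x ^ 2) := by
    ring
  rw [← sub_nonneg, hsos]
  positivity

theorem gammaBar_pos {n m : ℕ} (hn : 1 ≤ n) (hm : 1 ≤ m) : 0 < gammaBar n m := by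
  have hn' : (1 : ℝ) ≤ n := by exact_mod_cast hn
  have hm' : (1 : ℝ) ≤ m := by exact_mod_cast hm
  have hbase : (0 : ℝ) < n + m - 1 := by linarith
  unfold gammaBar
  have := Gamma_pos_of_pos (s := (m : ℝ) / 2) (by positivity)
  have := Gamma_pos_of_pos (s := 2 * (n : ℝ) + m) (by positivity)
  have := Gamma_pos_of_pos (s := (n : ℝ) + m / 2) (by positivity)
  positivity

theorem gammaBar_succ_div_gammaBar {n k : ℕ} (hn : 1 ≤ n) (hk : 1 ≤ k) :
    gammaBar n (k + 1) / gammaBar n k =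
      4 * (n + k + 1) / (n + k) ^ 2 * (1 - 1 / (n + k)) ^ (n + k) *
        (Gamma (k / 2 + 1 / 2) / Gamma (k / 2)) *
        (Gamma (n + k / 2 + 1 / 2 + 1 / 2) / Gamma (n + k / 2 + 1 / 2)) := by
  have hn' : (1 : ℝ) ≤ n := by exact_mod_cast hn
  have hk' : (1 : ℝ) ≤ k := by exact_mod_cast hk
  have hbase : (0 : ℝ) < n + k - 1 := by linarith
  have hzpow : (2 : ℝ) ^ ((n : ℤ) - k + 1) = 2 * 2 ^ ((n : ℤ) - (k + 1 : ℕ) + 1) := by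
    rw [← zpow_one_add₀ two_ne_zero]
    push_cast
    ring_nf
  have hΓ_num : Gamma (2 * n + (k + 1 : ℕ)) = (2 * n + k) * Gamma (2 * n + k) := by
    rw [← Gamma_add_one (by positivity)]
    push_cast
    ring_nf
  have hΓ_den : Gamma (n + k / 2 + 1 / 2 + 1 / 2) = (n + k / 2) * Gamma (n + k / 2) := by
    rw [← Gamma_add_one (by positivity)]
    ring_nf
  have hone_sub : 1 - 1 / ((n : ℝ) + k) = (n + k - 1) / (n + k) := by
    field_simp
  have hsucc_half : ((k + 1 : ℕ) : ℝ) / 2 = k / 2 + 1 / 2 := by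
    push_cast
    ring
  have hsucc_base : (n : ℝ) + (k + 1 : ℕ) - 1 = n + k := by
    push_cast
    ring
  have := Gamma_pos_of_pos (s := (k : ℝ) / 2) (by positivity)
  have := Gamma_pos_of_pos (s := 2 * (n : ℝ) + k) (by positivity)
  have := Gamma_pos_of_pos (s := (n : ℝ) + k / 2) (by positivity)
  have := Gamma_pos_of_pos (s := (n : ℝ) + k / 2 + 1 / 2) (by positivity)
  rw [gammaBar, gammaBar, hzpow, hΓ_num, hΓ_den, hone_sub, hsucc_base, hsucc_half,
    ← add_assoc n k 1, ← add_assoc (n : ℝ) (k / 2) (1 / 2), pow_succ, div_pow]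
  push_cast
  field_simp
  ring

theorem gammaBar_succ_div_gammaBar_sq_le {n k : ℕ} (hn : 1 ≤ n) (hk : 1 ≤ k) :
    (gammaBar n (k + 1) / gammaBar n k) ^ 2 ≤
      4 * (n + k + 1) ^ 2 * ((n + k) * (n + k + 1) - n * (n + 1)) /
        (n + k) ^ 4 / exp 1 ^ 2 := by
  have hN : (1 : ℝ) ≤ n + k := by exact_mod_cast hn.trans (Nat.le_add_right n k)
  have hpow : (1 - 1 / ((n : ℝ) + k)) ^ (n + k) ≤ (exp 1)⁻¹ := by
    have h := one_sub_div_pow_le_exp_neg (n := n + k) (t := 1) (by exact_mod_cast hN)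
    rwa [exp_neg, Nat.cast_add] at h
  have hpow_nonneg : 0 ≤ (1 - 1 / ((n : ℝ) + k)) ^ (n + k) :=
    pow_nonneg (sub_nonneg.2 (div_le_one_of_le₀ hN (by positivity))) _
  calc (gammaBar n (k + 1) / gammaBar n k) ^ 2
      = (4 * (n + k + 1) / (n + k) ^ 2) ^ 2 *
          ((1 - 1 / ((n : ℝ) + k)) ^ (n + k)) ^ 2 *
          (Gamma (k / 2 + 1 / 2) / Gamma (k / 2)) ^ 2 *
          (Gamma (n + k / 2 + 1 / 2 + 1 / 2) / Gamma (n + k / 2 + 1 / 2)) ^ 2 := by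
        rw [gammaBar_succ_div_gammaBar hn hk, mul_pow, mul_pow, mul_pow]
    _ ≤ (4 * (n + k + 1) / (n + k) ^ 2) ^ 2 * (exp 1)⁻¹ ^ 2 * (k / 2) *
          (n + k / 2 + 1 / 2) := by
        gcongr
        all_goals exact Gamma_add_half_div_Gamma_sq_le (by positivity)
    _ = 4 * (n + k + 1) ^ 2 * ((n + k) * (n + k + 1) - n * (n + 1)) /
          (n + k) ^ 4 / exp 1 ^ 2 := by
        field_simp
        ring

theorem gammaBar_succ_div_gammaBar_sq_le_of_two_le {n k : ℕ} (hn : 2 ≤ n) (hk : 1 ≤ k) :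
    (gammaBar n (k + 1) / gammaBar n k) ^ 2 ≤ 20 / (3 * exp 1 ^ 2) := by
  have hn_mul : (6 : ℝ) ≤ n * (n + 1) := by
    exact_mod_cast Nat.mul_le_mul hn (Nat.succ_le_succ hn)
  calc (gammaBar n (k + 1) / gammaBar n k) ^ 2
      ≤ 4 * (n + k + 1) ^ 2 * ((n + k) * (n + k + 1) - n * (n + 1)) / (n + k) ^ 4 / exp 1 ^ 2 :=
        gammaBar_succ_div_gammaBar_sq_le (one_le_two.trans hn) hk
    _ ≤ 4 * (n + k + 1) ^ 2 * ((n + k) * (n + k + 1) - 6) / (n + k) ^ 4 / exp 1 ^ 2 := by gcongr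
    _ ≤ 20 / 3 / exp 1 ^ 2 :=
        div_le_div_of_nonneg_right
          (div_le_of_le_mul₀ (by positivity) (by positivity)
            (four_mul_add_one_sq_mul_sub_six_le _))
          (by positivity)
    _ = 20 / (3 * exp 1 ^ 2) := div_div _ _ _

theorem gammaBar_ratio_sq_bound (n m : ℕ) (hn : 2 ≤ n) (hm : 2 ≤ m) :
    (gammaBar n m / gammaBar n (m - 1)) ^ 2 ≤ 20 / (3 * Real.exp 1 ^ 2) ∧
    gammaBar n m < gammaBar n (m - 1) := by
  obtain ⟨k, rfl⟩ := Nat.exists_eq_add_of_le' (one_le_two.trans hm)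
  have hk : 1 ≤ k := Nat.le_of_succ_le_succ hm
  have hn₁ : 1 ≤ n := one_le_two.trans hn
  have hpos : 0 < gammaBar n k := gammaBar_pos hn₁ hk
  have hpos' : 0 < gammaBar n (k + 1) := gammaBar_pos hn₁ k.succ_pos
  have hsq : (gammaBar n (k + 1) / gammaBar n k) ^ 2 ≤ 20 / (3 * exp 1 ^ 2) :=
    gammaBar_succ_div_gammaBar_sq_le_of_two_le hn hk
  have hconst : 20 / (3 * exp 1 ^ 2) < 1 := by
    rw [div_lt_one (by positivity)]
    nlinarith [exp_one_gt_d9]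
  rw [Nat.add_sub_cancel]
  refine ⟨hsq, (div_lt_one hpos).1 ?_⟩
  exact (sq_lt_one_iff₀ (by positivity)).1 (hsq.trans_lt hconst)
end

section
/- Let n ≥ 1 and m ≥ 1 be integers such that there exist m real 2n × 2n matrices U^{(1)}, …, U^{(m)} that are skew-symmetric (Uᵀ = -U), orthogonal (Uᵀ U = I), and pairwise anticommuting (U^{(i)} U^{(j)} = -U^{(j)} U^{(i)} for i ≠ j), i.e. (n, m) is the dimension pair of an H-type group. If (n, m) is not one of the four pairs (1,1), (2,1), (3,1), (2,2), then γ̃_{n,m} < 1. -/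
/-- The series `c_{n,m} = ∑_{k≥0} binom(k+n-1, k) / (2k+n)^{n+m}`. -/
noncomputable def seriesC (n m : ℕ) : ℝ :=
  ∑' k : ℕ, ((k + n - 1).choose k : ℝ) / (2 * (k : ℝ) + n) ^ (n + m)

/-- `γ̃_{n,m}`. -/
noncomputable def gammaTilde (n m : ℕ) : ℝ :=
  (1 / (2 : ℝ) ^ ((n : ℤ) - m + 1)) *
    (((n : ℝ) + m) / ((n : ℝ) ^ (n + m) * ((n : ℝ) + m - 1) ^ (n + m))) *
    (Real.Gamma ((m : ℝ) / 2) * Real.Gamma (2 * (n : ℝ) + m) /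
      Real.Gamma ((n : ℝ) + m / 2)) *
    (1 / seriesC n m)

/-!
Replacing `c_{n,m}` by its first term `n^{-(n+m)}` gives an upper bound for `γ̃_{n,m}` which, for
`n, m ≥ 1`, is decreasing in both `n` and `m`: with `N = n + m`, each of the two step ratios is at
most `2 (N + 1) (N - 1)^N / N^(N+1)`, which is at most `1` because `(1 - 1/N)^N ≤ e⁻¹ < 3/8`. The
bound is below `1` at `(1, 5)`, `(2, 3)`, `(4, 2)` and `(7, 1)`, hence above these pairs. At
`(3, 2)`, `(4, 1)`, `(5, 1)` and `(6, 1)` a few more terms of the series are enough. Of the pairs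
that remain, `(1, 2)`, `(1, 3)` and `(1, 4)` are not dimension pairs of H-type groups, since
skew-symmetric `2 × 2` matrices commute.
-/

section Pochhammer

variable {x : ℝ}

lemma Gamma_add_natCast_eq_ascPochhammer_mul (hx : 0 < x) (n : ℕ) :
    Real.Gamma (x + n) = (ascPochhammer ℝ n).eval x * Real.Gamma x := by
  induction n with
  | zero => simp
  | succ n ih =>
    rw [Nat.cast_succ, ← add_assoc, Real.Gamma_add_one (by positivity), ih,
      ascPochhammer_succ_eval]
    ring

lemma ascPochhammer_sq_mul_le (hx : 0 ≤ x) (n : ℕ) :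
    (ascPochhammer ℝ n).eval x ^ 2 * (x + n) ≤ x * (ascPochhammer ℝ n).eval (x + 1 / 2) ^ 2 := by
  induction n with
  | zero => simp
  | succ n ih =>
    rw [ascPochhammer_succ_eval, ascPochhammer_succ_eval, Nat.cast_succ]
    set p := (ascPochhammer ℝ n).eval x
    set q := (ascPochhammer ℝ n).eval (x + 1 / 2)
    have amgm : (x + n) * (x + (n + 1)) ≤ (x + 1 / 2 + n) ^ 2 := by nlinarith
    calc (p * (x + n)) ^ 2 * (x + (n + 1))
        = p ^ 2 * (x + n) * ((x + n) * (x + (n + 1))) := by ring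
      _ ≤ x * q ^ 2 * (x + 1 / 2 + n) ^ 2 := by gcongr
      _ = x * (q * (x + 1 / 2 + n)) ^ 2 := by ring

lemma two_mul_add_mul_ascPochhammer_le (hx : 0 ≤ x) (n : ℕ) :
    2 * (x + n) * (ascPochhammer ℝ n).eval x ≤
      (2 * x + n) * (ascPochhammer ℝ n).eval (x + 1 / 2) := by
  have hq : 0 < (ascPochhammer ℝ n).eval (x + 1 / 2) := ascPochhammer_pos n _ (by positivity)
  have hsq := ascPochhammer_sq_mul_le hx n
  set p := (ascPochhammer ℝ n).eval x
  set q := (ascPochhammer ℝ n).eval (x + 1 / 2)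
  have amgm : 4 * (x + n) * x ≤ (2 * x + n) ^ 2 := by nlinarith [sq_nonneg (n : ℝ)]
  refine le_of_sq_le_sq ?_ (by positivity)
  calc (2 * (x + n) * p) ^ 2 = 4 * (x + n) * (p ^ 2 * (x + n)) := by ring
    _ ≤ 4 * (x + n) * (x * q ^ 2) := by gcongr
    _ = 4 * (x + n) * x * q ^ 2 := by ring
    _ ≤ (2 * x + n) ^ 2 * q ^ 2 := by gcongr
    _ = ((2 * x + n) * q) ^ 2 := by ring

end Pochhammer

lemma two_mul_succ_mul_pred_pow_le {N : ℕ} (hN : 1 ≤ N) :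
    2 * ((N : ℝ) + 1) * ((N : ℝ) - 1) ^ N ≤ (N : ℝ) ^ (N + 1) := by
  obtain rfl | rfl | h3 : N = 1 ∨ N = 2 ∨ 3 ≤ N := by omega
  · norm_num
  · norm_num
  have h3' : (3 : ℝ) ≤ N := by exact_mod_cast h3
  have hexp : (1 - 1 / (N : ℝ)) ^ N ≤ 3 / 8 := by
    have h := Real.one_sub_div_pow_le_exp_neg (n := N) (t := 1) (by linarith)
    linarith [Real.exp_neg_one_lt_d9]
  calc 2 * ((N : ℝ) + 1) * ((N : ℝ) - 1) ^ N
      = 2 * ((N : ℝ) + 1) * (1 - 1 / (N : ℝ)) ^ N * (N : ℝ) ^ N := by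
        rw [mul_assoc _ (_ ^ N), ← mul_pow, sub_mul, one_div_mul_cancel (by positivity), one_mul]
    _ ≤ 2 * ((N : ℝ) + 1) * (3 / 8) * (N : ℝ) ^ N := by gcongr
    _ ≤ N * (N : ℝ) ^ N := by gcongr; linarith
    _ = (N : ℝ) ^ (N + 1) := (pow_succ' _ _).symm

/-- The value of `γ̃_{n,m}` when `c_{n,m}` is replaced by its first term `n^{-(n+m)}`. The Gamma
quotient is written with a factorial and the rising factorial
`(m/2)_n = Γ(n + m/2) / Γ(m/2)`. -/
noncomputable def gammaTildeLeading (n m : ℕ) : ℝ :=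
  2 ^ m * ((n : ℝ) + m) * (2 * n + m - 1).factorial /
    (2 ^ (n + 1) * ((n : ℝ) + m - 1) ^ (n + m) * (ascPochhammer ℝ n).eval ((m : ℝ) / 2))

section Monotonicity

variable {n m : ℕ}

lemma gammaTildeLeading_succ_left_le (hn : 1 ≤ n) (hm : 1 ≤ m) :
    gammaTildeLeading (n + 1) m ≤ gammaTildeLeading n m := by
  have hn' : (1 : ℝ) ≤ n := by exact_mod_cast hn
  have hm' : (1 : ℝ) ≤ m := by exact_mod_cast hm
  have hN : (0 : ℝ) < n + m - 1 := by linarith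
  have hp : 0 < (ascPochhammer ℝ n).eval ((m : ℝ) / 2) := ascPochhammer_pos n _ (by positivity)
  have hfact : ((2 * (n + 1) + m - 1).factorial : ℝ) =
      (2 * n + m + 1) * ((2 * n + m) * (2 * n + m - 1).factorial) := by
    rw [show 2 * (n + 1) + m - 1 = 2 * n + m + 1 by omega, Nat.factorial_succ,
      ← Nat.mul_factorial_pred (show 2 * n + m ≠ 0 by omega)]
    push_cast
    rfl
  have hpow := two_mul_succ_mul_pred_pow_le (show 1 ≤ n + m by omega)
  unfold gammaTildeLeading
  rw [hfact, ascPochhammer_succ_eval, add_right_comm n 1 m]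
  push_cast at hpow ⊢
  rw [show (n : ℝ) + 1 + m - 1 = n + m by ring, div_le_div_iff₀ (by positivity) (by positivity)]
  set p := (ascPochhammer ℝ n).eval ((m : ℝ) / 2)
  set F := ((2 * n + m - 1).factorial : ℝ)
  set A := ((n : ℝ) + m - 1) ^ (n + m)
  calc 2 ^ m * ((n : ℝ) + 1 + m) * ((2 * n + m + 1) * ((2 * n + m) * F)) * (2 ^ (n + 1) * A * p)
      = 2 ^ m * 2 ^ (n + 1) * F * p * (2 * n + m) *
          ((2 * n + m + 1) * ((n + m + 1) * A)) := by ring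
    _ ≤ 2 ^ m * 2 ^ (n + 1) * F * p * (2 * n + m) *
          (2 * (n + m) * ((n + m + 1) * A)) := by gcongr; linarith
    _ = 2 ^ m * 2 ^ (n + 1) * F * p * (2 * n + m) * (n + m) * (2 * (n + m + 1) * A) := by ring
    _ ≤ 2 ^ m * 2 ^ (n + 1) * F * p * (2 * n + m) * (n + m) * (n + m) ^ (n + m + 1) := by gcongr
    _ = _ := by ring

lemma gammaTildeLeading_succ_right_le (hn : 1 ≤ n) (hm : 1 ≤ m) :
    gammaTildeLeading n (m + 1) ≤ gammaTildeLeading n m := by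
  have hn' : (1 : ℝ) ≤ n := by exact_mod_cast hn
  have hm' : (1 : ℝ) ≤ m := by exact_mod_cast hm
  have hN : (0 : ℝ) < n + m - 1 := by linarith
  have hp : 0 < (ascPochhammer ℝ n).eval ((m : ℝ) / 2) := ascPochhammer_pos n _ (by positivity)
  have hq : 0 < (ascPochhammer ℝ n).eval ((m : ℝ) / 2 + 1 / 2) :=
    ascPochhammer_pos n _ (by positivity)
  have hfact : ((2 * n + (m + 1) - 1).factorial : ℝ) =
      (2 * n + m) * (2 * n + m - 1).factorial := by
    rw [← add_assoc, Nat.add_sub_cancel, ← Nat.mul_factorial_pred (show 2 * n + m ≠ 0 by omega)]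
    push_cast
    rfl
  have hpow := two_mul_succ_mul_pred_pow_le (show 1 ≤ n + m by omega)
  have hratio := two_mul_add_mul_ascPochhammer_le (x := (m : ℝ) / 2) (by positivity) n
  unfold gammaTildeLeading
  rw [hfact, ← add_assoc n m 1]
  push_cast at hpow ⊢
  rw [add_div, show (n : ℝ) + (m + 1) - 1 = n + m by ring,
    div_le_div_iff₀ (by positivity) (by positivity)]
  set p := (ascPochhammer ℝ n).eval ((m : ℝ) / 2)
  set q := (ascPochhammer ℝ n).eval ((m : ℝ) / 2 + 1 / 2)
  set F := ((2 * n + m - 1).factorial : ℝ)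
  set A := ((n : ℝ) + m - 1) ^ (n + m)
  calc 2 ^ (m + 1) * ((n : ℝ) + (m + 1)) * ((2 * n + m) * F) * (2 ^ (n + 1) * A * p)
      = 2 ^ m * 2 ^ (n + 1) * F * (2 * (n + m + 1) * A) * (2 * (m / 2 + n) * p) := by ring
    _ ≤ 2 ^ m * 2 ^ (n + 1) * F * (n + m) ^ (n + m + 1) * ((2 * (m / 2) + n) * q) := by gcongr
    _ = _ := by ring

lemma gammaTildeLeading_le_of_le {n' m' : ℕ} (hn : 1 ≤ n) (hm : 1 ≤ m) (hnn' : n ≤ n')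
    (hmm' : m ≤ m') : gammaTildeLeading n' m' ≤ gammaTildeLeading n m :=
  calc gammaTildeLeading n' m'
      ≤ gammaTildeLeading n m' :=
        antitoneOn_nat_Ici_of_succ_le (f := fun k => gammaTildeLeading k m') (k := n)
          (fun _ hk => gammaTildeLeading_succ_left_le (hn.trans hk) (hm.trans hmm'))
          Set.self_mem_Ici hnn' hnn'
    _ ≤ gammaTildeLeading n m :=
        antitoneOn_nat_Ici_of_succ_le (f := gammaTildeLeading n)
          (fun _ hk => gammaTildeLeading_succ_right_le hn (hm.trans hk)) Set.self_mem_Ici hmm' hmm'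

lemma gammaTildeLeading_lt_one_of_le (hn : 1 ≤ n) (hm : 1 ≤ m)
    (h : 5 ≤ m ∨ 2 ≤ n ∧ 3 ≤ m ∨ 4 ≤ n ∧ 2 ≤ m ∨ 7 ≤ n) : gammaTildeLeading n m < 1 := by
  rcases h with hm5 | ⟨hn2, hm3⟩ | ⟨hn4, hm2⟩ | hn7
  · refine (gammaTildeLeading_le_of_le le_rfl (by norm_num) hn hm5).trans_lt ?_
    norm_num [gammaTildeLeading, ascPochhammer_succ_eval, Nat.factorial]
  · refine (gammaTildeLeading_le_of_le (by norm_num) (by norm_num) hn2 hm3).trans_lt ?_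
    norm_num [gammaTildeLeading, ascPochhammer_succ_eval, Nat.factorial]
  · refine (gammaTildeLeading_le_of_le (by norm_num) (by norm_num) hn4 hm2).trans_lt ?_
    norm_num [gammaTildeLeading, ascPochhammer_succ_eval, Nat.factorial]
  · refine (gammaTildeLeading_le_of_le (by norm_num) le_rfl hn7 hm).trans_lt ?_
    norm_num [gammaTildeLeading, ascPochhammer_succ_eval, Nat.factorial]

end Monotonicity

section Series

variable {n m : ℕ}

lemma choose_add_pred_le_pow (hn : 1 ≤ n) (k : ℕ) :
    (k + n - 1).choose k ≤ (2 * k + n) ^ (n - 1) :=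
  calc (k + n - 1).choose k = (k + n - 1).choose (n - 1) :=
        Nat.choose_symm_of_eq_add (by omega)
    _ ≤ (k + n - 1) ^ (n - 1) := Nat.choose_le_pow _ _
    _ ≤ (2 * k + n) ^ (n - 1) := Nat.pow_le_pow_left (by omega) _

lemma summable_seriesC (hn : 1 ≤ n) (hm : 1 ≤ m) :
    Summable fun k : ℕ => ((k + n - 1).choose k : ℝ) / (2 * (k : ℝ) + n) ^ (n + m) := by
  have hsq : Summable fun k : ℕ => 1 / ((k + 1 : ℕ) : ℝ) ^ 2 :=
    (summable_nat_add_iff 1).2 (Real.summable_one_div_nat_pow.2 one_lt_two)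
  refine .of_nonneg_of_le (fun k => by positivity) (fun k => ?_) hsq
  have hchoose : ((k + n - 1).choose k : ℝ) ≤ (2 * (k : ℝ) + n) ^ (n - 1) := by
    exact_mod_cast choose_add_pred_le_pow hn k
  have hbase : ((k + 1 : ℕ) : ℝ) ≤ 2 * (k : ℝ) + n := by
    exact_mod_cast (show k + 1 ≤ 2 * k + n by omega)
  have hone : (1 : ℝ) ≤ 2 * (k : ℝ) + n := by
    exact_mod_cast (show 1 ≤ 2 * k + n by omega)
  calc ((k + n - 1).choose k : ℝ) / (2 * (k : ℝ) + n) ^ (n + m)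
      ≤ (2 * (k : ℝ) + n) ^ (n - 1) / (2 * (k : ℝ) + n) ^ (n + m) := by gcongr
    _ = 1 / (2 * (k : ℝ) + n) ^ (m + 1) := by
        rw [show n + m = (n - 1) + (m + 1) by omega, pow_add]
        field_simp
    _ ≤ 1 / (2 * (k : ℝ) + n) ^ 2 := by gcongr; omega
    _ ≤ 1 / ((k + 1 : ℕ) : ℝ) ^ 2 := by gcongr

lemma gammaTilde_eq_gammaTildeLeading_div (hn : 1 ≤ n) (hm : 1 ≤ m) :
    gammaTilde n m = gammaTildeLeading n m / ((n : ℝ) ^ (n + m) * seriesC n m) := by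
  have hx : (0 : ℝ) < m / 2 := by positivity
  have hfact : Real.Gamma (2 * (n : ℝ) + m) = (2 * n + m - 1).factorial := by
    rw [← Real.Gamma_nat_eq_factorial, ← Nat.cast_add_one, Nat.sub_add_cancel (by omega)]
    push_cast
    rfl
  have hG : Real.Gamma ((m : ℝ) / 2) ≠ 0 := (Real.Gamma_pos_of_pos hx).ne'
  unfold gammaTilde gammaTildeLeading
  rw [hfact, add_comm (n : ℝ) (m / 2), Gamma_add_natCast_eq_ascPochhammer_mul hx,
    zpow_add₀ two_ne_zero, zpow_sub₀ two_ne_zero, pow_succ 2 n]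
  simp only [zpow_natCast, zpow_one]
  field_simp

lemma gammaTilde_lt_one_of_lt_partialSum (hn : 1 ≤ n) (hm : 1 ≤ m) (K : ℕ)
    (h : gammaTildeLeading n m < (n : ℝ) ^ (n + m) *
      ∑ k ∈ Finset.range K, ((k + n - 1).choose k : ℝ) / (2 * (k : ℝ) + n) ^ (n + m)) :
    gammaTilde n m < 1 := by
  have hn' : (0 : ℝ) < n := by exact_mod_cast hn
  have hsum := summable_seriesC hn hm
  have hlt : gammaTildeLeading n m < (n : ℝ) ^ (n + m) * seriesC n m :=
    h.trans_le (mul_le_mul_of_nonneg_left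
      (hsum.sum_le_tsum (Finset.range K) fun k _ => by positivity) (by positivity))
  have hpos : 0 < seriesC n m :=
    hsum.tsum_pos (fun k => by positivity) 0 (by simpa using pow_pos hn' _)
  rwa [gammaTilde_eq_gammaTildeLeading_div hn hm, div_lt_one (by positivity)]

lemma gammaTilde_lt_one_of_gammaTildeLeading_lt_one (hn : 1 ≤ n) (hm : 1 ≤ m)
    (h : gammaTildeLeading n m < 1) : gammaTilde n m < 1 := by
  have hn' : (n : ℝ) ≠ 0 := by positivity
  exact gammaTilde_lt_one_of_lt_partialSum hn hm 1 (by simpa [hn'] using h)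

lemma gammaTilde_lt_one_of_mem
    (h : (n, m) ∈ ({(3, 2), (4, 1), (5, 1), (6, 1)} : Set (ℕ × ℕ))) : gammaTilde n m < 1 := by
  simp only [Set.mem_insert_iff, Set.mem_singleton_iff, Prod.mk.injEq] at h
  rcases h with ⟨rfl, rfl⟩ | ⟨rfl, rfl⟩ | ⟨rfl, rfl⟩ | ⟨rfl, rfl⟩ <;>
  · refine gammaTilde_lt_one_of_lt_partialSum (by norm_num) (by norm_num) 5 ?_
    norm_num [gammaTildeLeading, ascPochhammer_succ_eval, Finset.sum_range_succ, Nat.factorial,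
      Nat.choose]

end Series

section SkewMatrices

open Matrix

lemma apply_self_eq_zero_of_transpose_eq_neg {ι α : Type*} [AddGroup α] [IsAddTorsionFree α]
    {A : Matrix ι ι α} (hA : Aᵀ = -A) (i : ι) : A i i = 0 :=
  self_eq_neg.1 (congrFun₂ hA i i)

variable {R : Type*} [CommRing R] [IsAddTorsionFree R] {A B : Matrix (Fin 2) (Fin 2) R}

lemma commute_of_transpose_eq_neg (hA : Aᵀ = -A) (hB : Bᵀ = -B) : Commute A B := by
  have hA₁₀ : A 1 0 = -A 0 1 := congrFun₂ hA 0 1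
  have hB₁₀ : B 1 0 = -B 0 1 := congrFun₂ hB 0 1
  ext i j
  fin_cases i <;> fin_cases j <;>
    simp [mul_apply, Fin.sum_univ_two, apply_self_eq_zero_of_transpose_eq_neg hA,
      apply_self_eq_zero_of_transpose_eq_neg hB, hA₁₀, hB₁₀, mul_comm (A 0 1)]

lemma mul_ne_neg_mul_of_transpose_eq_neg [Nontrivial R] (hA : Aᵀ = -A) (hB : Bᵀ = -B)
    (hA' : Aᵀ * A = 1) (hB' : Bᵀ * B = 1) : A * B ≠ -(B * A) := by
  intro h
  have hAB : A * B = 0 := by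
    rw [(commute_of_transpose_eq_neg hB hA).eq] at h
    ext i j
    exact self_eq_neg.1 (congrFun₂ h i j)
  have hB0 : B = 0 := by
    calc B = Aᵀ * (A * B) := by rw [← mul_assoc, hA', one_mul]
      _ = 0 := by rw [hAB, mul_zero]
  simp [hB0] at hB'

lemma subsingleton_of_pairwise_anticommute [Nontrivial R] {ι : Type*}
    {U : ι → Matrix (Fin 2) (Fin 2) R} (hskew : ∀ i, (U i)ᵀ = -U i)
    (horth : ∀ i, (U i)ᵀ * U i = 1) (hanti : ∀ i j, i ≠ j → U i * U j = -(U j * U i)) :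
    Subsingleton ι where
  allEq i j := by
    by_contra hij
    exact mul_ne_neg_mul_of_transpose_eq_neg (hskew i) (hskew j) (horth i) (horth j)
      (hanti i j hij)

end SkewMatrices

theorem pleijel_htype_general (n m : ℕ) (hn : 1 ≤ n) (hm : 1 ≤ m)
    (hone : n = 1 → m ≤ 1 ∨ 5 ≤ m)
    (hexc : (n, m) ∉ ({(1, 1), (2, 1), (3, 1), (2, 2)} : Set (ℕ × ℕ))) :
    gammaTilde n m < 1 := by
  by_cases hfew : (n, m) ∈ ({(3, 2), (4, 1), (5, 1), (6, 1)} : Set (ℕ × ℕ))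
  · exact gammaTilde_lt_one_of_mem hfew
  · refine gammaTilde_lt_one_of_gammaTildeLeading_lt_one hn hm
      (gammaTildeLeading_lt_one_of_le hn hm ?_)
    simp only [Set.mem_insert_iff, Set.mem_singleton_iff, Prod.mk.injEq] at hexc hfew
    omega

open Matrix in
theorem pleijel_htype (n m : ℕ) (hn : 1 ≤ n) (hm : 1 ≤ m)
    (U : Fin m → Matrix (Fin (2 * n)) (Fin (2 * n)) ℝ)
    (hskew : ∀ i, (U i)ᵀ = -U i)
    (horth : ∀ i, (U i)ᵀ * U i = 1)
    (hanti : ∀ i j, i ≠ j → U i * U j = -(U j * U i))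
    (hexc : (n, m) ∉ ({(1, 1), (2, 1), (3, 1), (2, 2)} : Set (ℕ × ℕ))) :
    gammaTilde n m < 1 := by
  refine pleijel_htype_general n m hn hm ?_ hexc
  rintro rfl
  exact .inl (Fin.subsingleton_iff_le_one.1
    (subsingleton_of_pairwise_anticommute hskew horth hanti))
end
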